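/- Let f be a homeomorphism of the open annulus 𝔸 isotopic to the identity and satisfying the intersection property, and let F be a lift of f to ℝ². If Rec⁺(f) ≠ ∅, then Rot(F) ≠ ∅. -/

import Mathlib

open Filter Topology Set

noncomputable section

/-- The plane ℝ². -/
abbrev Plane := ℝ × ℝ

/-- The open annulus 𝔸 = ℝ/ℤ × ℝ. -/
abbrev Ann := AddCircle (1 : ℝ) × ℝ

/-- The covering map π : ℝ² → 𝔸, (x,y) ↦ (x + ℤ, y). -/
def prj : Plane → Ann := fun p => ((p.1 : AddCircle (1 : ℝ)), p.2)

/-- The deck transformation T^k : ℝ² → ℝ², (x,y) ↦ (x + k, y). -/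
def Tr (k : ℤ) : Plane → Plane := fun p => (p.1 + (k : ℝ), p.2)

/-- `F` is a lift of `f` to the universal cover ℝ² of the annulus. -/
def IsLift (f : Ann ≃ₜ Ann) (F : Plane ≃ₜ Plane) : Prop :=
  ∀ p : Plane, prj (F p) = f (prj p)

/-- `f` is isotopic to the identity: there is a continuous family of homeomorphisms
joining the identity to `f`. -/
def IsotopicToId (f : Ann ≃ₜ Ann) : Prop :=
  ∃ H : ℝ → Ann → Ann,
    Continuous (fun q : ℝ × Ann => H q.1 q.2) ∧
    (∀ t : ℝ, ∃ h : Ann ≃ₜ Ann, ∀ z, H t z = h z) ∧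
    (∀ z, H 0 z = z) ∧ (∀ z, H 1 z = f z)

/-- An essential circle in 𝔸: a simple closed curve which is not null-homotopic. -/
def IsEssentialCircle (c : Set Ann) : Prop :=
  ∃ φ : C(AddCircle (1 : ℝ), Ann), Function.Injective φ ∧ Set.range φ = c ∧
    ¬ ∃ pt : Ann, φ.Homotopic (ContinuousMap.const _ pt)

/-- `f` has the intersection property: every essential circle meets its image. -/
def IntersectionProperty (f : Ann → Ann) : Prop :=
  ∀ c : Set Ann, IsEssentialCircle c → (c ∩ f '' c).Nonempty

/-- `z` is a positively recurrent point of `g`: some subsequence of the forward orbit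
of `z` converges to `z`. -/
def PosRec {X : Type*} [TopologicalSpace X] (g : X → X) (z : X) : Prop :=
  ∃ φ : ℕ → ℕ, StrictMono φ ∧ Tendsto (fun k => g^[φ k] z) atTop (𝓝 z)

/-- The positively recurrent point `z` has rotation number `ρ` for the lift `F` of `f`. -/
def HasRotNum (f : Ann → Ann) (F : Plane → Plane) (z : Ann) (ρ : ℝ) : Prop :=
  PosRec f z ∧
    ∀ zt : Plane, prj zt = z →
      ∀ φ : ℕ → ℕ, StrictMono φ →
        Tendsto (fun k => f^[φ k] z) atTop (𝓝 z) →
        Tendsto (fun k => ((F^[φ k] zt).1 - zt.1) / (φ k : ℝ)) atTop (𝓝 ρ)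

/-- The rotation set Rot(F): the set of rotation numbers of positively recurrent
points of `f`. -/
def Rot (f : Ann → Ann) (F : Plane → Plane) : Set ℝ := {ρ | ∃ z, HasRotNum f F z ρ}

/-- The region `L(Γ)` of the plane on the left (west) of a line `Γ` (as a subset of ℝ²):
points lying in the connected component of the complement of `Γ` containing all far-west
points of the horizontal axis. -/
def Lset (Γ : Set Plane) : Set Plane :=
  {p | ∃ s : ℝ, ∀ x ≤ s, p ∈ connectedComponentIn Γᶜ ((x, 0) : Plane)}

/-- The region `R(Γ)` of the plane on the right (east) of a line `Γ`. -/
def Rset (Γ : Set Plane) : Set Plane :=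
  {p | ∃ s : ℝ, ∀ x ≥ s, p ∈ connectedComponentIn Γᶜ ((x, 0) : Plane)}

/-- The relation `Γ₁ < Γ₂` on (essential, oriented from south to north) lines:
`Cl(L(Γ₁)) ⊆ L(Γ₂)`. -/
def lineLT (Γ₁ Γ₂ : Set Plane) : Prop := closure (Lset Γ₁) ⊆ Lset Γ₂

/-- An essential line in ℝ², oriented from south to north: a properly embedded copy of ℝ
whose second coordinate tends to ±∞ at ±∞. -/
def IsEssLinePlane (Γ : ℝ → Plane) : Prop :=
  Continuous Γ ∧ Function.Injective Γ ∧ IsProperMap Γ ∧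
    Tendsto (fun t => (Γ t).2) atTop atTop ∧ Tendsto (fun t => (Γ t).2) atBot atBot

/-- An essential line in the annulus 𝔸: a properly embedded simple path joining one end
to the other. -/
def IsEssLineAnn (γ : ℝ → Ann) : Prop :=
  Continuous γ ∧ Function.Injective γ ∧ IsProperMap γ ∧
    ((Tendsto (fun t => (γ t).2) atTop atTop ∧ Tendsto (fun t => (γ t).2) atBot atBot) ∨
     (Tendsto (fun t => (γ t).2) atTop atBot ∧ Tendsto (fun t => (γ t).2) atBot atTop))

/-- An oriented essential line in 𝔸 joining the lower end S to the upper end N. -/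
def IsEssLineAnnSN (γ : ℝ → Ann) : Prop :=
  Continuous γ ∧ Function.Injective γ ∧ IsProperMap γ ∧
    Tendsto (fun t => (γ t).2) atTop atTop ∧ Tendsto (fun t => (γ t).2) atBot atBot

/-!
An isotopy from the identity to `f` provides, for a lift `F` read on `ℂ`, a continuous logarithm of
the slope `(F p - F q) / (p - q)` that is symmetric in `p` and `q`. A plane homeomorphism with such
a logarithm and without fixed points has no points of period two, because the symmetry would make
the displacement at such a point equal to its own negative. Period `n + 2` is reduced to period
`n + 1` by modifying the homeomorphism near two segments inside a critical disk without creating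
fixed points; this is Brouwer's lemma. Merging the jumps of a shortest periodic chain of free disks
into one homeomorphism turns it into Franks' lemma.

Write `T` for the translation by `1`. If `F^q p = T^k p` for some `q > 0`, then `k / q` is a
rotation number. Otherwise every `T^(-k) ∘ F^q` is fixed-point-free, and Franks' lemma for the
translates of a small disk about a lift `z` of the recurrent point shows that the returns
`F^n z ≈ T^d z` cannot have `d / n` both above and below `k / q` infinitely often. Hence `d / n`
has no upcrossings of rational intervals; it is bounded because all but finitely many `T^(-k) ∘ F`
push a fixed disk off itself, so it converges.
-/

/-! ### Logarithms of slopes -/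

section ComplexLogarithm

variable {A : Type*} [TopologicalSpace A]

lemma eq_of_cexp_eq [PreconnectedSpace A] {f g : A → ℂ} (hf : Continuous f) (hg : Continuous g)
    (hfg : ∀ a, Complex.exp (f a) = Complex.exp (g a)) {a₀ : A} (h₀ : f a₀ = g a₀) : f = g :=
  Complex.isCoveringMap_exp.eq_of_comp_eq hf hg (funext fun a => Subtype.ext (hfg a)) a₀ h₀

lemma exists_continuous_cexp_eq [SimplyConnectedSpace A] [LocallyPathConnectedSpace A]
    {f : A → ℂ} (hf : Continuous f) (hf₀ : ∀ a, f a ≠ 0) :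
    ∃ L : A → ℂ, Continuous L ∧ ∀ a, Complex.exp (L a) = f a := by
  obtain ⟨a₀⟩ : Nonempty A := inferInstance
  obtain ⟨L, ⟨-, hL⟩, -⟩ := Complex.isCoveringMap_exp.existsUnique_continuousMap_lifts
    ⟨fun a => (⟨f a, hf₀ a⟩ : {z : ℂ // z ≠ 0}), by fun_prop⟩ a₀ (Complex.log (f a₀))
    (Subtype.ext (Complex.exp_log (hf₀ a₀)))
  exact ⟨L, L.continuous, fun a => congrArg Subtype.val (congrFun hL a)⟩

lemma exists_continuous_cexp_eq_of_homotopy {R : unitInterval × A → ℂ} (hR : Continuous R)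
    (hR₀ : ∀ p, R p ≠ 0) (hR₁ : ∀ a, R (0, a) = 1) :
    ∃ L : unitInterval × A → ℂ, Continuous L ∧ (∀ p, Complex.exp (L p) = R p) ∧
      ∀ a, L (0, a) = 0 := by
  let H : C(unitInterval × A, {z : ℂ // z ≠ 0}) := ⟨fun p => ⟨R p, hR₀ p⟩, by fun_prop⟩
  have H₀ (a : A) : H (0, a) = ⟨_, Complex.exp_ne_zero (ContinuousMap.const A 0 a)⟩ :=
    Subtype.ext (by simp [H, hR₁])
  refine ⟨Complex.isCoveringMap_exp.liftHomotopy H _ H₀, ContinuousMap.continuous _, fun p => ?_,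
    Complex.isCoveringMap_exp.liftHomotopy_zero H _ H₀⟩
  exact congrArg Subtype.val (congrFun (Complex.isCoveringMap_exp.liftHomotopy_lifts H _ H₀) p)

end ComplexLogarithm

/-- Over pairs of distinct points the slope `(h p - h q) / (p - q)` has a continuous logarithm
which is symmetric in `p` and `q`. This is the form in which isotopy to the identity enters the
proof of Brouwer's lemma. -/
def HasSymmLogSlope (h : ℂ → ℂ) : Prop :=
  ∃ L : ℂ × ℂ → ℂ, ContinuousOn L (diagonal ℂ)ᶜ ∧ (∀ p q, L (p, q) = L (q, p)) ∧
    ∀ p q, h p - h q = Complex.exp (L (p, q)) * (p - q)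

namespace HasSymmLogSlope

variable {g h : ℂ → ℂ}

lemma add_const (c : ℂ) : HasSymmLogSlope (· + c) :=
  ⟨0, continuousOn_const, fun _ _ => rfl, fun p q => by simp⟩

protected lemma id : HasSymmLogSlope id := by
  simpa [Function.id_def] using add_const 0

lemma injective (hh : HasSymmLogSlope h) : Function.Injective h := by
  obtain ⟨L, -, -, hL⟩ := hh
  intro p q hpq
  simpa [hpq, Complex.exp_ne_zero, sub_eq_zero] using (hL p q).symm

lemma comp (hg : HasSymmLogSlope g) (hh : HasSymmLogSlope h) (hc : Continuous h) :
    HasSymmLogSlope (g ∘ h) := by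
  have h_inj := hh.injective
  obtain ⟨L, hLc, hLs, hL⟩ := hg
  obtain ⟨M, hMc, hMs, hM⟩ := hh
  refine ⟨fun p => L (h p.1, h p.2) + M p, ?_, fun p q => ?_, fun p q => ?_⟩
  · exact (hLc.comp (by fun_prop) fun p hp => h_inj.ne hp).add hMc
  · exact congrArg₂ (· + ·) (hLs _ _) (hMs _ _)
  · rw [Function.comp_apply, Function.comp_apply, hL, hM, Complex.exp_add, mul_assoc]

lemma iterate (hh : HasSymmLogSlope h) (hc : Continuous h) (n : ℕ) : HasSymmLogSlope h^[n] := by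
  induction n with
  | zero => exact .id
  | succ n ih => exact ih.comp hh hc

lemma symm {h : ℂ ≃ₜ ℂ} (hh : HasSymmLogSlope h) : HasSymmLogSlope h.symm := by
  obtain ⟨L, hLc, hLs, hL⟩ := hh
  refine ⟨fun p => -L (h.symm p.1, h.symm p.2), ?_, fun p q => ?_, fun p q => ?_⟩
  · exact (hLc.comp (by fun_prop) fun p hp => h.symm.injective.ne hp).neg
  · exact congrArg Neg.neg (hLs _ _)
  · have := hL (h.symm p) (h.symm q)
    simp only [h.apply_symm_apply] at this
    simp [this, Complex.exp_neg, Complex.exp_ne_zero]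

lemma of_norm_sub_sub_lt (hc : Continuous h)
    (hh : ∀ p q, p ≠ q → ‖h p - h q - (p - q)‖ < ‖p - q‖) : HasSymmLogSlope h := by
  have slope_mem {p q : ℂ} (hpq : p ≠ q) : (h p - h q) / (p - q) ∈ Complex.slitPlane := by
    have hpq' := sub_ne_zero.2 hpq
    suffices ‖(h p - h q) / (p - q) - 1‖ < 1 by
      simpa using Complex.mem_slitPlane_of_norm_lt_one this
    rw [div_sub_one hpq', norm_div, div_lt_one (norm_pos_iff.2 hpq')]
    exact hh p q hpq
  refine ⟨fun p => Complex.log ((h p.1 - h p.2) / (p.1 - p.2)), ?_, fun p q => ?_, fun p q => ?_⟩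
  · exact ((by fun_prop : Continuous fun p : ℂ × ℂ => h p.1 - h p.2).continuousOn.div
      (by fun_prop) fun p hp => sub_ne_zero.2 hp).clog fun p hp => slope_mem hp
  · dsimp only
    rw [← neg_sub (h p), ← neg_sub p, neg_div_neg_eq]
  · rcases eq_or_ne p q with rfl | hpq
    · simp
    · rw [Complex.exp_log (Complex.slitPlane_ne_zero (slope_mem hpq)),
        div_mul_cancel₀ _ (sub_ne_zero.2 hpq)]

lemma of_isotopy {G : unitInterval × ℂ → ℂ} (hc : Continuous G)
    (hinj : ∀ t, Function.Injective fun p => G (t, p)) (h₀ : ∀ p, G (0, p) = p) :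
    HasSymmLogSlope fun p => G (1, p) := by
  classical
  let R (x : unitInterval × ↥(diagonal ℂ)ᶜ) : ℂ :=
    (G (x.1, x.2.1.1) - G (x.1, x.2.1.2)) / (x.2.1.1 - x.2.1.2)
  have hden (d : ↥(diagonal ℂ)ᶜ) : d.1.1 - d.1.2 ≠ 0 := sub_ne_zero.2 d.2
  obtain ⟨L, hLc, hL, hL₀⟩ := exists_continuous_cexp_eq_of_homotopy (R := R)
    (by fun_prop (disch := exact fun x => hden x.2))
    (fun x => div_ne_zero (sub_ne_zero.2 ((hinj x.1).ne x.2.2)) (hden x.2))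
    fun d => by simp only [R, h₀, div_self (hden d)]
  have L_symm {p q : ℂ} (hpq : p ≠ q) : L (1, ⟨(p, q), hpq⟩) = L (1, ⟨(q, p), hpq.symm⟩) := by
    refine congrFun (eq_of_cexp_eq (f := fun t => L (t, ⟨(p, q), hpq⟩))
      (g := fun t => L (t, ⟨(q, p), hpq.symm⟩)) (by fun_prop) (by fun_prop) (fun t => ?_)
      (a₀ := 0) (by rw [hL₀, hL₀])) 1
    simp only [hL, R]
    rw [← neg_sub (G (t, p)), ← neg_sub p, neg_div_neg_eq]
  let L₁ (p : ℂ × ℂ) : ℂ := if hp : p ∈ (diagonal ℂ)ᶜ then L (1, ⟨p, hp⟩) else 0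
  have L₁_apply {p q : ℂ} (hpq : p ≠ q) : L₁ (p, q) = L (1, ⟨(p, q), hpq⟩) := dif_pos hpq
  refine ⟨L₁, ?_, fun p q => ?_, fun p q => ?_⟩
  · rw [continuousOn_iff_continuous_domRestrict]
    convert (show Continuous fun d => L (1, d) by fun_prop) using 2 with d
    exact L₁_apply d.2
  · rcases eq_or_ne p q with rfl | hpq
    · rfl
    · rw [L₁_apply hpq, L₁_apply hpq.symm, L_symm hpq]
  · rcases eq_or_ne p q with rfl | hpq
    · simp
    · rw [L₁_apply hpq, hL, div_mul_cancel₀ _ (sub_ne_zero.2 hpq)]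

end HasSymmLogSlope

/-! ### Pushing points -/

section Push

variable {E : Type*} [NormedAddCommGroup E] [NormedSpace ℝ E]

/-- The map pushing `c` to `c + r • v` and tapering off linearly to the identity at distance `r`
from `c`. -/
def push (c v : E) (r : ℝ) (p : E) : E := p + max (r - dist p c) 0 • v

lemma continuous_push (c v : E) (r : ℝ) : Continuous (push c v r) := by
  unfold push
  fun_prop

lemma push_center (c v : E) {r : ℝ} (hr : 0 ≤ r) : push c v r c = c + r • v := by
  simp [push, hr]

lemma push_of_le_dist (c v : E) {r : ℝ} {p : E} (hp : r ≤ dist p c) : push c v r p = p := by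
  simp [push, hp]

lemma norm_push_sub_push_sub_le (c v : E) (r : ℝ) (p q : E) :
    ‖push c v r p - push c v r q - (p - q)‖ ≤ ‖v‖ * ‖p - q‖ := by
  have : push c v r p - push c v r q - (p - q) =
      (max (r - dist p c) 0 - max (r - dist q c) 0) • v := by
    simp only [push]
    module
  rw [this, norm_smul, mul_comm, Real.norm_eq_abs]
  gcongr
  calc |max (r - dist p c) 0 - max (r - dist q c) 0|
      ≤ |(r - dist p c) - (r - dist q c)| := abs_max_sub_max_le_abs ..
    _ = |dist q c - dist p c| := by ring_nf
    _ ≤ ‖p - q‖ := by rw [← dist_eq_norm, dist_comm p q]; exact abs_dist_sub_le q p c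

lemma exists_homeomorph_eq_push [CompleteSpace E] (c : E) {v : E} (r : ℝ) (hv : ‖v‖ < 1) :
    ∃ φ : E ≃ₜ E, ⇑φ = push c v r := by
  have happ : ApproximatesLinearOn (push c v r) (ContinuousLinearEquiv.refl ℝ E : E →L[ℝ] E)
      univ ‖v‖₊ := fun p _ q _ => by simpa using norm_push_sub_push_sub_le c v r p q
  refine ⟨happ.toHomeomorph _ ?_, rfl⟩
  rcases subsingleton_or_nontrivial E with hE | hE
  · exact .inl hE
  · right
    rw [← NNReal.coe_lt_coe]
    simpa [ContinuousLinearMap.norm_id] using hv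

end Push

lemma mem_of_eqOn_id_compl {X : Type*} {φ : X ≃ X} {U : Set X} (hφ : EqOn φ id Uᶜ) {p : X}
    (hp : p ∈ U) : φ p ∈ U := by
  by_contra h
  exact h ((φ.injective (hφ h)).symm ▸ hp)

lemma exists_hasSymmLogSlope_apply_eq_of_mem_ball {x y : ℂ} {r : ℝ} (hy : y ∈ Metric.ball x r) :
    ∃ φ : ℂ ≃ₜ ℂ, HasSymmLogSlope φ ∧ φ x = y ∧ EqOn φ id (Metric.ball x r)ᶜ := by
  have hr : 0 < r := dist_nonneg.trans_lt hy
  set v : ℂ := r⁻¹ • (y - x)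
  have hv : ‖v‖ < 1 := by
    rw [norm_smul, ← dist_eq_norm, norm_inv, Real.norm_of_nonneg hr.le, inv_mul_lt_one₀ hr]
    exact hy
  obtain ⟨φ, hφ⟩ := exists_homeomorph_eq_push x r hv
  refine ⟨φ, ?_, ?_, fun p hp => ?_⟩
  · rw [hφ]
    exact .of_norm_sub_sub_lt (continuous_push x v r) fun p q hpq =>
      (norm_push_sub_push_sub_le x v r p q).trans_lt
        (mul_lt_of_lt_one_left (norm_pos_iff.2 (sub_ne_zero.2 hpq)) hv)
  · rw [hφ, push_center _ _ hr.le, smul_inv_smul₀ hr.ne', add_sub_cancel]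
  · rw [hφ]
    exact push_of_le_dist _ _ (by simpa using hp)

lemma exists_hasSymmLogSlope_apply_eq {U A : Set ℂ} (hU : IsOpen U) (hA : IsPreconnected A)
    (hAU : A ⊆ U) {a b : ℂ} (ha : a ∈ A) (hb : b ∈ A) :
    ∃ φ : ℂ ≃ₜ ℂ, HasSymmLogSlope φ ∧ φ a = b ∧ EqOn φ id Uᶜ := by
  refine hA.induction₂ (fun a b => ∃ φ : ℂ ≃ₜ ℂ, HasSymmLogSlope φ ∧ φ a = b ∧ EqOn φ id Uᶜ)
    (fun x hx => ?_) ?_ ?_ ha hb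
  · obtain ⟨r, hr, hrU⟩ := Metric.isOpen_iff.1 hU x (hAU hx)
    filter_upwards [mem_nhdsWithin_of_mem_nhds (Metric.ball_mem_nhds x hr)] with y hy
    obtain ⟨φ, hφ, hφx, hφU⟩ := exists_hasSymmLogSlope_apply_eq_of_mem_ball hy
    exact ⟨φ, hφ, hφx, hφU.mono (compl_subset_compl.2 hrU)⟩
  · rintro x y z - - - ⟨φ, hφ, rfl, hφU⟩ ⟨ψ, hψ, rfl, hψU⟩
    refine ⟨φ.trans ψ, hψ.comp hφ φ.continuous, rfl, fun p hp => ?_⟩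
    rw [Homeomorph.trans_apply, hφU hp]
    exact hψU hp
  · rintro x y - - ⟨φ, hφ, rfl, hφU⟩
    exact ⟨φ.symm, hφ.symm, φ.symm_apply_apply x, fun p hp => φ.symm_apply_eq.2 (hφU hp).symm⟩

/-! ### Brouwer homeomorphisms and disk chains -/

/-- A fixed-point-free homeomorphism of the plane that is isotopic to the identity, in the form
`HasSymmLogSlope`. -/
structure IsBrouwerHomeo (h : ℂ ≃ₜ ℂ) : Prop where
  hasSymmLogSlope : HasSymmLogSlope h
  apply_ne : ∀ p, h p ≠ p

/-- No Brouwer homeomorphism has a point of period `n`: the induction hypothesis in the proof of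
Brouwer's lemma. -/
def NoPeriodicPoint (n : ℕ) : Prop :=
  ∀ ⦃h : ℂ ≃ₜ ℂ⦄, IsBrouwerHomeo h → ∀ p, ¬ Function.IsPeriodicPt h n p

lemma noPeriodicPoint_one : NoPeriodicPoint 1 := fun _ hh p => hh.apply_ne p

-- If `h p - p = exp (Θ p)` and `L` is the log slope, then `Θ (h p) - Θ p - L (h p, p)` is a
-- constant multiple of `2πi`. Comparing its values at `x` and `h x`, the symmetry of `L` gives
-- `Θ (h x) = Θ x`, so `h x - x` equals its own negative.
lemma noPeriodicPoint_two : NoPeriodicPoint 2 := by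
  intro h hh x hx
  have hhx : h (h x) = x := hx
  have hne (p : ℂ) : h p - p ≠ 0 := sub_ne_zero.2 (hh.apply_ne p)
  obtain ⟨L, hLc, hLs, hL⟩ := hh.hasSymmLogSlope
  obtain ⟨Θ, hΘc, hΘ⟩ := exists_continuous_cexp_eq (f := fun p => h p - p) (by fun_prop) hne
  let c (p : ℂ) : ℂ := Θ (h p) - Θ p - L (h p, p)
  have hc : Continuous c :=
    (by fun_prop : Continuous fun p => Θ (h p) - Θ p).sub
      (hLc.comp_continuous (by fun_prop) hh.apply_ne)
  have exp_c (p : ℂ) : Complex.exp (c p) = 1 := by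
    simp only [c, Complex.exp_sub, hΘ, hL (h p) p]
    field_simp [hne p, Complex.exp_ne_zero]
  have c_eq : c (h x) = c x :=
    congrFun (eq_of_cexp_eq hc (continuous_const (y := c x)) (fun p => by rw [exp_c, exp_c])
      (rfl : c x = c x)) (h x)
  have Θ_eq : Θ (h x) = Θ x := by
    simp only [c, hhx, hLs x (h x)] at c_eq
    linear_combination (-1 / 2) * c_eq
  have := hΘ (h x)
  rw [Θ_eq, hΘ, hhx] at this
  exact hne x (by linear_combination (1 / 2) * this)

lemma isPeriodicPt_of_forall_lt {α : Type*} {g : α → α} {p : ℕ → α} {n : ℕ}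
    (hp : ∀ i < n, g (p i) = p (i + 1)) (hn : g (p n) = p 0) :
    Function.IsPeriodicPt g (n + 1) (p 0) := by
  have (i : ℕ) (hi : i ≤ n) : g^[i] (p 0) = p i := by
    induction i with
    | zero => rfl
    | succ i ih => rw [Function.iterate_succ_apply', ih (by lia), hp i hi]
  rw [Function.IsPeriodicPt, Function.IsFixedPt, Function.iterate_succ_apply', this n le_rfl, hn]

section DiskFamily

variable {ι κ : Type*}

/-- A family of pairwise disjoint open connected subsets of the plane, which play the role of the
disks of a disk chain. -/
structure IsDiskFamily (D : ι → Set ℂ) : Prop where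
  isOpen : ∀ i, IsOpen (D i)
  isPreconnected : ∀ i, IsPreconnected (D i)
  disjoint : Pairwise (Function.onFun Disjoint D)

/-- The equivalence relation whose classes are the sets `D i` and the points outside all of
them. -/
def SameDisk (D : ι → Set ℂ) (p q : ℂ) : Prop := p = q ∨ ∃ i, p ∈ D i ∧ q ∈ D i

namespace SameDisk

variable {D : ι → Set ℂ} {p q s : ℂ}

lemma refl (D : ι → Set ℂ) (p : ℂ) : SameDisk D p p := .inl rfl

lemma symm (h : SameDisk D p q) : SameDisk D q p := h.imp Eq.symm fun ⟨i, hp, hq⟩ => ⟨i, hq, hp⟩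

lemma trans (hD : IsDiskFamily D) (h₁ : SameDisk D p q) (h₂ : SameDisk D q s) :
    SameDisk D p s := by
  rcases h₁ with rfl | ⟨i, hp, hq⟩
  · exact h₂
  rcases h₂ with rfl | ⟨j, hq', hs⟩
  · exact .inr ⟨i, hp, hq⟩
  obtain rfl : i = j := hD.disjoint.eq (not_disjoint_iff.2 ⟨q, hq, hq'⟩)
  exact .inr ⟨i, hp, hs⟩

end SameDisk

variable {D : ι → Set ℂ}

lemma IsDiskFamily.exists_apply_eq (hD : IsDiskFamily D) {a b : ℂ} (hab : SameDisk D a b) :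
    ∃ φ : ℂ ≃ₜ ℂ, HasSymmLogSlope φ ∧ (∀ p, SameDisk D (φ p) p) ∧ φ a = b ∧
      ∀ p, ¬ SameDisk D p a → φ p = p := by
  rcases hab with rfl | ⟨i, ha, hb⟩
  · exact ⟨.refl ℂ, .id, .refl D, rfl, fun _ _ => rfl⟩
  · obtain ⟨φ, hφ, hφa, hφU⟩ := exists_hasSymmLogSlope_apply_eq (hD.isOpen i)
      (hD.isPreconnected i) subset_rfl ha hb
    refine ⟨φ, hφ, fun p => ?_, hφa, fun p hp => hφU fun hpi => hp (.inr ⟨i, hpi, ha⟩)⟩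
    by_cases hp : p ∈ D i
    · exact .inr ⟨i, mem_of_eqOn_id_compl (φ := φ.toEquiv) hφU hp, hp⟩
    · exact .inl (hφU hp)

lemma IsDiskFamily.exists_forall_apply_eq (hD : IsDiskFamily D) (s : Finset κ) {a b : κ → ℂ}
    (hab : ∀ k ∈ s, SameDisk D (a k) (b k))
    (ha : (s : Set κ).Pairwise fun k l => ¬ SameDisk D (a k) (a l)) :
    ∃ φ : ℂ ≃ₜ ℂ, HasSymmLogSlope φ ∧ (∀ p, SameDisk D (φ p) p) ∧ (∀ k ∈ s, φ (a k) = b k) ∧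
      ∀ p, (∀ k ∈ s, ¬ SameDisk D p (a k)) → φ p = p := by
  classical
  induction s using Finset.induction_on with
  | empty =>
    exact ⟨.refl ℂ, .id, .refl D, by simp, fun _ _ => rfl⟩
  | insert k s hk ih =>
    rw [Finset.coe_insert, pairwise_insert_of_notMem (by simpa using hk)] at ha
    rw [Finset.forall_mem_insert] at hab
    obtain ⟨φ, hφ, hφD, hφs, hφ_id⟩ := ih hab.2 ha.1
    obtain ⟨ψ, hψ, hψD, hψk, hψ_id⟩ := hD.exists_apply_eq hab.1
    refine ⟨φ.trans ψ, hψ.comp hφ φ.continuous, fun p => (hψD _).trans hD (hφD p), ?_,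
      fun p hp => ?_⟩
    · rw [Finset.forall_mem_insert]
      refine ⟨?_, fun l hl => ?_⟩
      · rw [Homeomorph.trans_apply, hφ_id _ fun l hl => (ha.2 l hl).1, hψk]
      · rw [Homeomorph.trans_apply, hφs l hl]
        exact hψ_id _ fun h => (ha.2 l hl).2 ((hab.2 l hl).trans hD h)
    · rw [Finset.forall_mem_insert] at hp
      rw [Homeomorph.trans_apply, hφ_id p hp.2, hψ_id p hp.1]

lemma IsBrouwerHomeo.trans_of_sameDisk {h φ : ℂ ≃ₜ ℂ} (hh : IsBrouwerHomeo h)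
    (hfree : ∀ i, MapsTo h (D i) (D i)ᶜ) (hφ : HasSymmLogSlope φ)
    (hφD : ∀ p, SameDisk D (φ p) p) : IsBrouwerHomeo (h.trans φ) where
  hasSymmLogSlope := hφ.comp hh.hasSymmLogSlope h.continuous
  apply_ne p hp := by
    have : SameDisk D p (h p) := by simpa [show φ (h p) = p from hp] using hφD (h p)
    rcases this with hp | ⟨i, hp, hhp⟩
    · exact hh.apply_ne p hp.symm
    · exact hfree i hp hhp

-- A shortest periodic chain visits each disk at most once, so all its jumps can be realised by one
-- homeomorphism preserving every disk, whose composition with `h` then has a periodic point.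
lemma IsBrouwerHomeo.not_sameDisk_of_chain {h : ℂ ≃ₜ ℂ} (hh : IsBrouwerHomeo h)
    (hD : IsDiskFamily D) (hfree : ∀ i, MapsTo h (D i) (D i)ᶜ) {n : ℕ}
    (hn : ∀ j ≤ n, NoPeriodicPoint (j + 1)) {p : ℕ → ℂ}
    (hp : ∀ i < n, SameDisk D (h (p i)) (p (i + 1))) : ¬ SameDisk D (h (p n)) (p 0) := by
  induction n using Nat.strong_induction_on generalizing p with
  | _ n ih =>
  intro hclose
  by_cases hrep : ∃ i j, i < j ∧ j ≤ n ∧ SameDisk D (h (p i)) (h (p j))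
  · obtain ⟨i, j, hij, hjn, hsame⟩ := hrep
    obtain ⟨m, rfl⟩ := Nat.exists_eq_add_of_lt hij
    refine ih m (by lia) (fun j hj => hn j (by lia)) (p := fun k => p (i + 1 + k))
      (fun k hk => hp (i + 1 + k) (by lia)) ?_
    rw [show i + 1 + m = i + m + 1 by lia]
    exact hsame.symm.trans hD (hp i (by lia))
  · push Not at hrep
    obtain ⟨φ, hφ, hφD, hφp, -⟩ := hD.exists_forall_apply_eq (Finset.range (n + 1))
      (a := fun k => h (p k)) (b := fun k => if k = n then p 0 else p (k + 1))
      (fun k hk => by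
        split_ifs with hkn
        · exact hkn ▸ hclose
        · exact hp k (by grind))
      (fun k hk l hl hkl => by
        rcases hkl.lt_or_gt with hlt | hlt
        · exact hrep k l hlt (by grind)
        · exact fun hsame => hrep l k hlt (by grind) hsame.symm)
    refine hn n le_rfl (hh.trans_of_sameDisk hfree hφ hφD) (p 0)
      (isPeriodicPt_of_forall_lt (fun i hi => ?_) ?_)
    · exact (hφp i (by grind)).trans (if_neg hi.ne)
    · exact (hφp n (by grind)).trans (if_pos rfl)

end DiskFamily

/-! ### Brouwer's lemma -/

section FreeSets

variable {X : Type*} [TopologicalSpace X] [T2Space X]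

lemma exists_isOpen_mapsTo_compl {h : X → X} (hc : Continuous h) {K C : Set X} (hK : IsCompact K)
    (hC : IsCompact C) (hKC : MapsTo h K Cᶜ) :
    ∃ U V, IsOpen U ∧ IsOpen V ∧ K ⊆ U ∧ C ⊆ V ∧ MapsTo h U Vᶜ := by
  obtain ⟨U, V, hU, hV, hKU, hCV, hUV⟩ := SeparatedNhds.of_isCompact_isCompact (hK.image hc) hC
    (disjoint_left.2 (forall_mem_image.2 hKC))
  exact ⟨h ⁻¹' U, V, hU.preimage hc, hV, image_subset_iff.1 hKU, hCV,
    fun p hp => disjoint_left.1 hUV hp⟩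

lemma exists_isOpen_mapsTo_compl_self {h : X → X} (hc : Continuous h) {K : Set X}
    (hK : IsCompact K) (hfree : MapsTo h K Kᶜ) :
    ∃ U, IsOpen U ∧ K ⊆ U ∧ MapsTo h U Uᶜ := by
  obtain ⟨U, V, hU, hV, hKU, hKV, hUV⟩ := exists_isOpen_mapsTo_compl hc hK hK hfree
  exact ⟨U ∩ V, hU.inter hV, subset_inter hKU hKV, fun p hp hhp => hUV hp.1 hhp.2⟩

end FreeSets

lemma IsBrouwerHomeo.iterate_notMem_of_free {h : ℂ ≃ₜ ℂ} (hh : IsBrouwerHomeo h) {n : ℕ}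
    (hn : ∀ j ≤ n, NoPeriodicPoint (j + 1)) {A : Set ℂ} (hA : IsCompact A)
    (hA' : IsPreconnected A) (hfree : MapsTo h A Aᶜ) {x : ℂ} (hx : x ∈ A) :
    h^[n + 1] x ∉ A := by
  intro hnx
  obtain ⟨U, hU, hAU, hUfree⟩ := exists_isOpen_mapsTo_compl_self h.continuous hA hfree
  let D (_ : Unit) : Set ℂ := connectedComponentIn U x
  have hD : IsDiskFamily D :=
    ⟨fun _ => hU.connectedComponentIn, fun _ => isPreconnected_connectedComponentIn,
      Subsingleton.pairwise⟩
  have hAD : A ⊆ D () := hA'.subset_connectedComponentIn hx hAU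
  have hDfree (i : Unit) : MapsTo h (D i) (D i)ᶜ :=
    hUfree.mono (connectedComponentIn_subset U x)
      (compl_subset_compl.2 (connectedComponentIn_subset U x))
  refine hh.not_sameDisk_of_chain hD hDfree hn (p := fun i => h^[i] x)
    (fun i _ => .inl (Function.iterate_succ_apply' ..).symm) (.inr ⟨(), ?_, hAD hx⟩)
  rw [← Function.iterate_succ_apply' h]
  exact hAD hnx

/-- The closed disk of radius `r` about `x` meets its image under `h`, if at all, only along the
boundary circles of both. -/
def IsCriticalRadius {X : Type*} [PseudoMetricSpace X] (h : X → X) (x : X) (r : ℝ) : Prop :=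
  ∀ p, dist p x ≤ r → dist (h p) x ≤ r → dist p x = r ∧ dist (h p) x = r

lemma IsCriticalRadius.mapsTo_compl {X : Type*} [PseudoMetricSpace X] {h : X → X} {x : X} {r : ℝ}
    (hr : IsCriticalRadius h x r) (hne : ∀ p, h p ≠ p) {A : Set X} (hA : ∀ p ∈ A, dist p x ≤ r)
    (hA' : {p ∈ A | dist p x = r}.Subsingleton) : MapsTo h A Aᶜ := by
  intro p hp hhp
  obtain ⟨hpr, hhpr⟩ := hr p (hA p hp) (hA _ hhp)
  exact hne p (hA' ⟨hhp, hhpr⟩ ⟨hp, hpr⟩)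

section CriticalDisk

variable {E : Type*} [NormedAddCommGroup E] [NormedSpace ℝ E]

lemma dist_le_of_mem_segment {x u p : E} (hp : p ∈ segment ℝ x u) : dist p x ≤ dist u x := by
  rw [dist_comm p, dist_comm u, ← dist_add_dist_of_mem_segment hp]
  exact le_add_of_nonneg_right dist_nonneg

lemma eq_of_mem_segment_of_dist_le {x u p : E} (hp : p ∈ segment ℝ x u)
    (hle : dist u x ≤ dist p x) : p = u := by
  rw [dist_comm p, dist_comm u, ← dist_add_dist_of_mem_segment hp] at hle
  exact dist_le_zero.1 (by linarith)

lemma isCompact_segment (x u : E) : IsCompact (segment ℝ x u) := by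
  rw [segment_eq_image']
  exact isCompact_Icc.image (by fun_prop)

lemma exists_isCriticalRadius [ProperSpace E] (h : E ≃ₜ E) (x : E) :
    ∃ u, dist (h u) x = dist u x ∧ IsCriticalRadius h x (dist u x) := by
  obtain ⟨u, hu⟩ : ∃ u, ∀ p, max (dist u x) (dist (h u) x) ≤ max (dist p x) (dist (h p) x) :=
    Continuous.exists_forall_le (f := fun p => max (dist p x) (dist (h p) x)) (by fun_prop)
      (tendsto_atTop_mono (fun p => le_max_left ..) (tendsto_dist_right_cocompact_atTop x))
  set r := max (dist u x) (dist (h u) x)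
  suffices IsCriticalRadius h x r by
    obtain ⟨hur, hhur⟩ := this u (le_max_left ..) (le_max_right ..)
    exact ⟨u, hhur.trans hur.symm, hur.symm ▸ this⟩
  rcases eq_or_ne r 0 with h₀ | h₀
  · intro p hp hhp
    rw [h₀] at hp hhp ⊢
    exact ⟨hp.antisymm dist_nonneg, hhp.antisymm dist_nonneg⟩
  have hdisj : Disjoint (Metric.ball x r) (h ⁻¹' Metric.ball x r) :=
    disjoint_left.2 fun p hp hhp => (hu p).not_gt (max_lt hp hhp)
  have hdisj_left := hdisj.closure_left (Metric.isOpen_ball.preimage h.continuous)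
  have hdisj_right := hdisj.closure_right Metric.isOpen_ball
  rw [← h.preimage_closure, closure_ball x h₀] at hdisj_right
  rw [closure_ball x h₀] at hdisj_left
  intro p hp hhp
  exact ⟨hp.antisymm (not_lt.1 fun hlt => disjoint_left.1 hdisj_right hlt hhp),
    hhp.antisymm (not_lt.1 fun hlt => disjoint_left.1 hdisj_left hp hlt)⟩

lemma IsCriticalRadius.mapsTo_segment_compl {h : E → E} {x u : E}
    (hr : IsCriticalRadius h x (dist u x)) (hne : ∀ p, h p ≠ p) :
    MapsTo h (segment ℝ x u) (segment ℝ x u)ᶜ :=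
  hr.mapsTo_compl hne (fun _ => dist_le_of_mem_segment) fun _ hp _ hq =>
    (eq_of_mem_segment_of_dist_le hp.1 hp.2.ge).trans
      (eq_of_mem_segment_of_dist_le hq.1 hq.2.ge).symm

lemma IsCriticalRadius.mapsTo_union_segment_compl {h : E → E} {x u v w v' : E}
    (hr : IsCriticalRadius h x (dist u x)) (hne : ∀ p, h p ≠ p) (hw : dist w x = dist u x)
    (hv : v ∈ segment ℝ x u) (hv' : v' ∈ segment ℝ x w) (hvv' : v = u → v' ≠ w) :
    MapsTo h (segment ℝ x v ∪ segment ℝ x v') (segment ℝ x v ∪ segment ℝ x v')ᶜ := by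
  have dist_v := dist_le_of_mem_segment hv
  have dist_v' := hw ▸ dist_le_of_mem_segment hv'
  have on_sphere : ∀ p ∈ segment ℝ x v ∪ segment ℝ x v', dist p x = dist u x →
      p = u ∧ v = u ∨ p = w ∧ v' = w := by
    rintro p (hp | hp) hpu
    · obtain rfl := eq_of_mem_segment_of_dist_le hv (hpu ▸ dist_le_of_mem_segment hp)
      exact .inl ⟨eq_of_mem_segment_of_dist_le hp hpu.ge, rfl⟩
    · obtain rfl := eq_of_mem_segment_of_dist_le hv' (hw ▸ hpu ▸ dist_le_of_mem_segment hp)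
      exact .inr ⟨eq_of_mem_segment_of_dist_le hp (hw.trans hpu.symm).le, rfl⟩
  refine hr.mapsTo_compl hne ?_ fun p hp q hq => ?_
  · rintro p (hp | hp)
    · exact (dist_le_of_mem_segment hp).trans dist_v
    · exact (dist_le_of_mem_segment hp).trans dist_v'
  · rcases on_sphere p hp.1 hp.2 with ⟨rfl, h₁⟩ | ⟨rfl, h₁⟩ <;>
      rcases on_sphere q hq.1 hq.2 with ⟨rfl, h₂⟩ | ⟨rfl, h₂⟩
    · rfl
    · exact (hvv' h₁ h₂).elim
    · exact (hvv' h₂ h₁).elim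
    · rfl

end CriticalDisk

lemma IsBrouwerHomeo.exists_free_segments {h : ℂ ≃ₜ ℂ} (hh : IsBrouwerHomeo h) (x : ℂ) :
    ∃ u, MapsTo h (segment ℝ x u) (segment ℝ x u)ᶜ ∧
      MapsTo h (segment ℝ x (h u)) (segment ℝ x (h u))ᶜ ∧
      MapsTo (h ∘ h) (segment ℝ x u) (segment ℝ x (h u))ᶜ := by
  obtain ⟨u, hu, hr⟩ := exists_isCriticalRadius h x
  refine ⟨u, hr.mapsTo_segment_compl hh.apply_ne, (hu ▸ hr).mapsTo_segment_compl hh.apply_ne,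
    fun v hv hv' => ?_⟩
  have hfree := hr.mapsTo_union_segment_compl hh.apply_ne hu hv hv' <| by
    rintro rfl
    exact hh.apply_ne _
  have no_period : ∀ j ≤ 1, NoPeriodicPoint (j + 1) := by
    intro j hj
    interval_cases j
    · exact noPeriodicPoint_one
    · exact noPeriodicPoint_two
  exact hh.iterate_notMem_of_free no_period ((isCompact_segment x v).union (isCompact_segment x _))
    ((convex_segment x v).isPreconnected.union x (left_mem_segment ..) (left_mem_segment ..)
      (convex_segment x _).isPreconnected) hfree (.inl (right_mem_segment ..))
    (.inr (right_mem_segment ..))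

lemma apply_symm_apply_ne_self {X : Type*} {h φ ψ : X ≃ X} {P Q : Set X} (hne : ∀ p, h p ≠ p)
    (hφ : EqOn φ id Pᶜ) (hψ : EqOn ψ id Qᶜ) (hP : MapsTo h P Pᶜ) (hQ : MapsTo h Q Qᶜ)
    (hQP : MapsTo (h ∘ h) Q Pᶜ) (p : X) : h (ψ (h.symm (φ (h p)))) ≠ p := by
  intro hp
  by_cases hhp : h p ∈ P
  · have hφhp := mem_of_eqOn_id_compl hφ hhp
    by_cases hQ' : h.symm (φ (h p)) ∈ Q
    · exact hQP (mem_of_eqOn_id_compl hψ hQ') (by rwa [Function.comp_apply, hp])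
    · rw [hψ hQ', id, h.apply_symm_apply] at hp
      exact hP (hp ▸ hφhp) hhp
  · rw [hφ hhp, id, h.symm_apply_apply] at hp
    by_cases hpQ : p ∈ Q
    · have := mem_of_eqOn_id_compl hψ hpQ
      exact hQ this (hp.symm ▸ hpQ)
    · rw [hψ hpQ] at hp
      exact hne p hp

lemma IsBrouwerHomeo.exists_perturbation {h : ℂ ≃ₜ ℂ} (hh : IsBrouwerHomeo h) {x : ℂ} {S : Set ℂ}
    (hS : S.Finite) (hSfree : ∀ A, IsCompact A → IsPreconnected A → MapsTo h A Aᶜ → x ∈ A →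
      Disjoint A S) :
    ∃ φ ψ : ℂ ≃ₜ ℂ, EqOn φ id S ∧ EqOn ψ id S ∧ ψ (h.symm (φ x)) = x ∧
      IsBrouwerHomeo (h.trans (φ.trans (h.symm.trans (ψ.trans h)))) := by
  obtain ⟨u, hu, hw, huw⟩ := hh.exists_free_segments x
  have hu_compact := isCompact_segment x u
  have hw_compact := isCompact_segment x (h u)
  have hu_conn := (convex_segment x u).isPreconnected
  have hw_conn := (convex_segment x (h u)).isPreconnected
  have xu := left_mem_segment ℝ x u
  have xw := left_mem_segment ℝ x (h u)
  obtain ⟨Q, hQ, huQ, hQfree⟩ := exists_isOpen_mapsTo_compl_self h.continuous hu_compact hu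
  obtain ⟨P, hP, hwP, hPfree⟩ := exists_isOpen_mapsTo_compl_self h.continuous hw_compact hw
  obtain ⟨Q', P', hQ', hP', huQ', hwP', hQP⟩ :=
    exists_isOpen_mapsTo_compl (h.continuous.comp h.continuous) hu_compact hw_compact huw
  have hSo : IsOpen Sᶜ := hS.isClosed.isOpen_compl
  obtain ⟨φ, hφ, hφx, hφP⟩ := exists_hasSymmLogSlope_apply_eq ((hP.inter hP').inter hSo) hw_conn
    (subset_inter (subset_inter hwP hwP') (hSfree _ hw_compact hw_conn hw xw).subset_compl_right)
    xw (right_mem_segment ℝ x (h u))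
  obtain ⟨ψ, hψ, hψu, hψQ⟩ := exists_hasSymmLogSlope_apply_eq ((hQ.inter hQ').inter hSo) hu_conn
    (subset_inter (subset_inter huQ huQ') (hSfree _ hu_compact hu_conn hu xu).subset_compl_right)
    (right_mem_segment ℝ x u) xu
  refine ⟨φ, ψ, fun p hp => hφP fun hp' => hp'.2 hp, fun p hp => hψQ fun hp' => hp'.2 hp,
    by rw [hφx, h.symm_apply_apply, hψu], ?_, ?_⟩
  · have hhL := hh.hasSymmLogSlope
    exact (((hhL.comp hψ ψ.continuous).comp hhL.symm h.symm.continuous).comp hφ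
      φ.continuous).comp hhL h.continuous
  · refine apply_symm_apply_ne_self (h := h.toEquiv) (φ := φ.toEquiv) (ψ := ψ.toEquiv) hh.apply_ne
      hφP hψQ ?_ ?_ ?_
    · exact fun p hp hhp => hPfree hp.1.1 hhp.1.1
    · exact fun p hp hhp => hQfree hp.1.1 hhp.1.1
    · exact fun p hp hhp => hQP hp.1.2 hhp.1.2

-- The perturbed map agrees with `h` along the orbit of `x`, except that it sends the last point
-- before `x` directly to `h x`: it has a point of period one less.
lemma noPeriodicPoint_add_two {n : ℕ} (hn : ∀ j ≤ n, NoPeriodicPoint (j + 1)) :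
    NoPeriodicPoint (n + 2) := by
  intro h hh x hx
  let S : Set ℂ := (fun i => h^[i + 1] x) '' Iic n
  have hS : S.Finite := (finite_Iic n).image _
  have mem_S {i : ℕ} (hi : i ≤ n) : h^[i + 1] x ∈ S := mem_image_of_mem _ hi
  obtain ⟨φ, ψ, hφS, hψS, hφψ, hg⟩ := hh.exists_perturbation (x := x) hS
    fun A hA hA' hfree hxA => by
      rw [disjoint_comm, disjoint_left]
      rintro _ ⟨i, hi, rfl⟩
      exact hh.iterate_notMem_of_free (fun j hj => hn j (hj.trans hi)) hA hA' hfree hxA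
  refine hn n le_rfl hg (h x) (isPeriodicPt_of_forall_lt (p := fun i => h^[i + 1] x)
    (fun i hi => ?_) ?_)
  · simp only [Homeomorph.trans_apply]
    rw [← Function.iterate_succ_apply' h, hφS (mem_S hi), id,
      Function.iterate_succ_apply' h (i + 1), h.symm_apply_apply, hψS (mem_S hi.le), id]
  · simp only [Homeomorph.trans_apply]
    rw [← Function.iterate_succ_apply' h, show h^[n + 1 + 1] x = x from hx, hφψ]
    rfl

theorem noPeriodicPoint_succ (n : ℕ) : NoPeriodicPoint (n + 1) := by
  induction n using Nat.strong_induction_on with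
  | _ n ih =>
  obtain _ | n := n
  · exact noPeriodicPoint_one
  · exact noPeriodicPoint_add_two fun j hj => ih j (by lia)

/-! ### Franks' lemma -/

lemma exists_seq_of_transGen {α : Type*} {r : α → α → Prop} {a b : α}
    (hab : Relation.TransGen r a b) :
    ∃ (n : ℕ) (p : ℕ → α), p 0 = a ∧ (∀ i < n, r (p i) (p (i + 1))) ∧ r (p n) b := by
  induction hab using Relation.TransGen.head_induction_on with
  | single hab => exact ⟨0, fun _ => _, rfl, by simp, hab⟩
  | @head a c hac _ ih =>
    obtain ⟨n, p, rfl, hp, hpn⟩ := ih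
    refine ⟨n + 1, fun | 0 => a | i + 1 => p i, rfl, fun i hi => ?_, hpn⟩
    cases i with
    | zero => exact hac
    | succ i => exact hp i (by lia)

lemma transGen_iterate_of_forall {α : Type*} {r : α → α → Prop} {h : α → α}
    (hr : ∀ x, r x (h x)) {x y : α} {m : ℕ} (hxy : r (h^[m] x) y) : Relation.TransGen r x y := by
  induction m generalizing x with
  | zero => exact .single hxy
  | succ m ih => exact .head (hr x) (ih hxy)

/-- Some positive iterate of `h` maps a point of `D i` into `D j`. -/
def Reaches {X ι : Type*} (h : X → X) (D : ι → Set X) (i j : ι) : Prop :=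
  ∃ m, ∃ x ∈ D i, h^[m + 1] x ∈ D j

lemma exists_transGen_sameDisk_of_transGen_reaches {ι : Type*} {h : ℂ → ℂ} {D : ι → Set ℂ}
    {i j : ι} (hij : Relation.TransGen (Reaches h D) i j) :
    ∃ x ∈ D i, ∀ y ∈ D j, Relation.TransGen (fun p q => SameDisk D (h p) q) x y := by
  have reach {m : ℕ} {x y : ℂ} {k : ι} (hx : h^[m + 1] x ∈ D k) (hy : y ∈ D k) :
      Relation.TransGen (fun p q => SameDisk D (h p) q) x y :=
    transGen_iterate_of_forall (fun p => .refl D (h p))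
      (.inr ⟨k, by rwa [← Function.iterate_succ_apply' h], hy⟩)
  induction hij with
  | single hij =>
    obtain ⟨m, x, hx, hmx⟩ := hij
    exact ⟨x, hx, fun y hy => reach hmx hy⟩
  | tail _ hjk ih =>
    obtain ⟨x, hx, hxy⟩ := ih
    obtain ⟨m, y, hy, hmy⟩ := hjk
    exact ⟨x, hx, fun z hz => (hxy y hy).trans (reach hmy hz)⟩

theorem IsBrouwerHomeo.not_transGen_reaches_self {ι : Type*} {h : ℂ ≃ₜ ℂ} (hh : IsBrouwerHomeo h)
    {D : ι → Set ℂ} (hD : IsDiskFamily D) (hfree : ∀ i, MapsTo h (D i) (D i)ᶜ) (i : ι) :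
    ¬ Relation.TransGen (Reaches h D) i i := by
  intro hii
  obtain ⟨x, hx, hxx⟩ := exists_transGen_sameDisk_of_transGen_reaches hii
  obtain ⟨n, p, hp₀, hp, hpn⟩ := exists_seq_of_transGen (hxx x hx)
  exact hh.not_sameDisk_of_chain hD hfree (fun j _ => noPeriodicPoint_succ j) hp (hp₀ ▸ hpn)

/-! ### Returns of a lift -/

/-- The filter of pairs `(n, d)` with `0 < n` for which `h^[n] z` is close to `z + d`: the
approximate returns, with their displacements, of the image of `z` modulo integer translations. -/
def returns (h : ℂ → ℂ) (z : ℂ) : Filter (ℕ × ℤ) :=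
  comap (fun x => h^[x.1] z - x.2) (𝓝 z) ⊓ 𝓟 {x | 0 < x.1}

section Returns

variable {h : ℂ → ℂ} {z : ℂ}

lemma eventually_returns_pos : ∀ᶠ x in returns h z, 0 < x.1 :=
  mem_inf_of_right (mem_principal_self _)

lemma eventually_returns_mem {U : Set ℂ} (hU : U ∈ 𝓝 z) :
    ∀ᶠ x in returns h z, h^[x.1] z - x.2 ∈ U :=
  mem_inf_of_left (preimage_mem_comap hU)

lemma eventually_returns_add (hc : Continuous h) (hT : ∀ k : ℤ, Function.Commute h (· + (k : ℂ)))
    {P : ℕ × ℤ → Prop} (hP : ∀ᶠ x in returns h z, P x) :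
    ∀ᶠ y in returns h z, ∀ᶠ x in returns h z, P (x + y) := by
  rw [returns, eventually_inf_principal, eventually_comap] at hP
  obtain ⟨U, hUP, hU, hzU⟩ := _root_.mem_nhds_iff.1 hP
  filter_upwards [eventually_returns_mem (hU.mem_nhds hzU), eventually_returns_pos] with y hyU hy
  have hcont : Continuous fun w => h^[y.1] w - y.2 := (hc.iterate _).sub continuous_const
  filter_upwards [eventually_returns_mem ((hU.preimage hcont).mem_nhds hyU)] with x hx
  refine hUP hx (x + y) ?_ (Nat.add_pos_right x.1 hy)
  have hxy := (hT x.2).iterate_left y.1 (h^[x.1] z - x.2)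
  simp only [sub_add_cancel, ← Function.iterate_add_apply] at hxy
  rw [Prod.fst_add, Prod.snd_add, add_comm x.1, hxy, Int.cast_add, add_comm (x.2 : ℂ),
    add_sub_add_right_eq_sub]

lemma frequently_returns_add (hc : Continuous h)
    (hT : ∀ k : ℤ, Function.Commute h (· + (k : ℂ))) {P Q R : ℕ × ℤ → Prop}
    (hP : ∃ᶠ x in returns h z, P x) (hQ : ∃ᶠ x in returns h z, Q x)
    (hPQ : ∀ x y, P x → Q y → R (x + y)) : ∃ᶠ x in returns h z, R x := by
  by_contra hR
  obtain ⟨y, hy, hyR⟩ :=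
    (hQ.and_eventually (eventually_returns_add hc hT (not_frequently.1 hR))).exists
  obtain ⟨x, hx, hxR⟩ := (hP.and_eventually hyR).exists
  exact hxR (hPQ x y hx hy)

lemma exists_frequently_and_eq {α β : Type*} [Finite β] {l : Filter α} {P : α → Prop}
    (hP : ∃ᶠ x in l, P x) (f : α → β) : ∃ b, ∃ᶠ x in l, P x ∧ f x = b := by
  by_contra! hb
  obtain ⟨x, hx, hxb⟩ := (hP.and_eventually (eventually_all.2 hb)).exists
  exact hxb (f x) hx rfl

lemma frequently_returns_dvd (hc : Continuous h)
    (hT : ∀ k : ℤ, Function.Commute h (· + (k : ℂ))) {P : ℕ × ℤ → Prop}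
    (hadd : ∀ x y, P x → P y → P (x + y)) (hP : ∃ᶠ x in returns h z, P x) {q : ℕ} (hq : 0 < q) :
    ∃ᶠ x in returns h z, P x ∧ q ∣ x.1 := by
  have : NeZero q := ⟨hq.ne'⟩
  obtain ⟨c, hPc⟩ := exists_frequently_and_eq hP fun x => (x.1 : ZMod q)
  have hmul (k : ℕ) : ∃ᶠ x in returns h z, P x ∧ (x.1 : ZMod q) = (k + 1) * c := by
    induction k with
    | zero => simpa using hPc
    | succ k ih =>
      refine frequently_returns_add hc hT ih hPc fun x y hx hy => ⟨hadd x y hx.1 hy.1, ?_⟩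
      rw [Prod.fst_add, Nat.cast_add, hx.2, hy.2]
      push_cast
      ring
  refine (hmul (q - 1)).mono fun x hx => ⟨hx.1, (ZMod.natCast_eq_zero_iff _ _).1 ?_⟩
  rw [hx.2, Nat.cast_sub hq]
  simp

end Returns

lemma transGen_self_of_forall_add {r : ℤ → ℤ → Prop} {a b : ℤ} (ha : 0 < a) (hb : b < 0)
    (hra : ∀ k, r k (k + a)) (hrb : ∀ k, r k (k + b)) (k : ℤ) : Relation.TransGen r k k := by
  have iter {c : ℤ} (hc : ∀ k, r k (k + c)) (n : ℕ) (k : ℤ) :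
      Relation.TransGen r k (k + (n + 1) * c) := by
    refine transGen_iterate_of_forall hc (m := n) ?_
    simpa only [add_right_iterate, nsmul_eq_mul, add_one_mul, add_assoc] using hc (k + n * c)
  obtain ⟨m, rfl⟩ : ∃ m : ℕ, a = m + 1 := ⟨a.toNat - 1, by lia⟩
  obtain ⟨n, rfl⟩ : ∃ n : ℕ, b = -(n + 1) := ⟨(-b).toNat - 1, by lia⟩
  convert (iter hra n k).trans (iter hrb m _) using 1
  ring

section IntegerTranslations

variable {h : ℂ ≃ₜ ℂ} {z : ℂ} {q : ℕ} {p : ℤ}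

lemma isDiskFamily_ball_add_intCast (z : ℂ) {ε : ℝ} (hε : ε ≤ 1 / 2) :
    IsDiskFamily fun k : ℤ => Metric.ball (z + k) ε where
  isOpen _ := Metric.isOpen_ball
  isPreconnected _ := (convex_ball _ _).isPreconnected
  disjoint k l hkl := by
    refine Metric.ball_disjoint_ball ?_
    have : (1 : ℝ) ≤ |((k - l : ℤ) : ℝ)| := by exact_mod_cast Int.one_le_abs (sub_ne_zero.2 hkl)
    rw [dist_add_left, dist_eq_norm, ← Int.cast_sub, Complex.norm_intCast]
    linarith

lemma mem_ball_add_intCast_iff {w : ℂ} {k : ℤ} {ε : ℝ} :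
    w ∈ Metric.ball (z + k) ε ↔ w - k ∈ Metric.ball z ε := by
  rw [Metric.mem_ball, Metric.mem_ball, dist_eq_norm, dist_eq_norm, sub_sub, add_comm z]

-- The returns chain the translates of the ball by `a` and by `b`; as `a` and `b` have opposite
-- signs, such a chain can be closed up, which Franks' lemma forbids.
lemma IsBrouwerHomeo.notMem_ball_of_pos_of_neg (hh : IsBrouwerHomeo h)
    (hT : ∀ k : ℤ, Function.Commute h (· + (k : ℂ))) {ε : ℝ} (hε : ε ≤ 1 / 2)
    (hfree : MapsTo h (Metric.ball z ε) (Metric.ball z ε)ᶜ) {m n : ℕ} {a b : ℤ} (hm : 0 < m)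
    (hn : 0 < n) (ha : 0 < a) (hb : b < 0) (hma : h^[m] z - a ∈ Metric.ball z ε) :
    h^[n] z - b ∉ Metric.ball z ε := by
  intro hnb
  have hz : z ∈ Metric.ball z ε := Metric.mem_ball_self (Metric.nonempty_ball.1 ⟨_, hma⟩)
  have reach {j : ℕ} {c : ℤ} (hj : 0 < j) (hjc : h^[j] z - c ∈ Metric.ball z ε) (k : ℤ) :
      Reaches h (fun k : ℤ => Metric.ball (z + k) ε) k (k + c) := by
    refine ⟨j - 1, z + k, by simpa [mem_ball_add_intCast_iff] using hz, ?_⟩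
    have hjk : h^[j] (z + k) = h^[j] z + k := (hT k).iterate_left j z
    rw [Nat.sub_add_cancel hj, hjk, mem_ball_add_intCast_iff, add_comm k, Int.cast_add,
      add_sub_add_right_eq_sub]
    exact hjc
  have hfree' (k : ℤ) : MapsTo h (Metric.ball (z + k) ε) (Metric.ball (z + k) ε)ᶜ := by
    intro x hx
    rw [mem_ball_add_intCast_iff] at hx
    have hxk : h x = h (x - k) + k := by simpa using hT k (x - k)
    rw [mem_compl_iff, mem_ball_add_intCast_iff, hxk, add_sub_cancel_right]
    exact hfree hx
  exact hh.not_transGen_reaches_self (isDiskFamily_ball_add_intCast z hε) hfree' 0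
    (transGen_self_of_forall_add ha hb (reach hm hma) (reach hn hnb) 0)

lemma HasSymmLogSlope.exists_homeomorph_iterate_sub (hh : HasSymmLogSlope h) (q : ℕ) (p : ℤ) :
    ∃ G : ℂ ≃ₜ ℂ, HasSymmLogSlope G ∧ ∀ x, G x = h^[q] x - p := by
  have hq : ⇑(h ^ q) = h^[q] := hom_coe_pow _ rfl (fun _ _ => rfl) h q
  refine ⟨(h ^ q).trans (Homeomorph.addRight (-(p : ℂ))), ?_, fun x => ?_⟩
  · exact (HasSymmLogSlope.add_const _).comp (hq ▸ hh.iterate h.continuous q) (h ^ q).continuous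
  · simp [hq, sub_eq_add_neg]

lemma HasSymmLogSlope.mul_le_of_mul_lt_of_mapsTo_compl (hh : HasSymmLogSlope h)
    (hT : ∀ k : ℤ, Function.Commute h (· + (k : ℂ))) (hqp : ∀ x, h^[q] x ≠ x + p) {ε : ℝ}
    (hε : ε ≤ 1 / 2)
    (hfree : MapsTo (fun x => h^[q] x - p) (Metric.ball z ε) (Metric.ball z ε)ᶜ) {i j : ℕ}
    {c d : ℤ} (hi : 0 < i) (hj : 0 < j) (hic : h^[q * i] z - c ∈ Metric.ball z ε)
    (hjd : h^[q * j] z - d ∈ Metric.ball z ε) (hc : p * i < c) : p * j ≤ d := by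
  obtain ⟨G, hG, hGq⟩ := hh.exists_homeomorph_iterate_sub q p
  have hGT (k : ℤ) : Function.Commute G (· + (k : ℂ)) := fun x => by
    have : h^[q] (x + k) = h^[q] x + k := (hT k).iterate_left q x
    simp only [hGq, this, add_sub_right_comm]
  have iter (n : ℕ) : G^[n] z = h^[q * n] z - (p * n : ℤ) := by
    induction n with
    | zero => simp
    | succ n ih =>
      have : h^[q] (G^[n] z + (p * n : ℤ)) = h^[q] (G^[n] z) + (p * n : ℤ) :=
        (hT (p * n)).iterate_left q _
      rw [ih, sub_add_cancel, ← Function.iterate_add_apply, add_comm, ← Nat.mul_succ] at this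
      rw [Function.iterate_succ_apply', hGq, ih, this]
      push_cast
      ring
  by_contra! hd
  have hB : IsBrouwerHomeo G := ⟨hG, fun x => by simpa [hGq, sub_eq_iff_eq_add] using hqp x⟩
  refine hB.notMem_ball_of_pos_of_neg (z := z) hGT hε (by simpa only [← hGq] using hfree) hi hj
    (sub_pos.2 hc) (sub_neg.2 hd) ?_ ?_
  · rwa [iter, Int.cast_sub, sub_sub_sub_cancel_right]
  · rwa [iter, Int.cast_sub, sub_sub_sub_cancel_right]

lemma HasSymmLogSlope.not_frequently_lt_and_gt (hh : HasSymmLogSlope h)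
    (hT : ∀ k : ℤ, Function.Commute h (· + (k : ℂ))) (hq : 0 < q)
    (hqp : ∀ x, h^[q] x ≠ x + p) :
    ¬ ((∃ᶠ x in returns h z, q * x.2 < p * x.1) ∧ ∃ᶠ x in returns h z, p * x.1 < q * x.2) := by
  rintro ⟨hlt, hgt⟩
  obtain ⟨U, hU, hzU, hfree⟩ := exists_isOpen_mapsTo_compl_self (h := fun x => h^[q] x - p)
    ((h.continuous.iterate q).sub continuous_const) (isCompact_singleton (x := z))
    (by simpa [sub_eq_iff_eq_add] using hqp z)
  obtain ⟨δ, hδ, hδU⟩ := Metric.mem_nhds_iff.1 (hU.mem_nhds (singleton_subset_iff.1 hzU))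
  set ε := min δ (1 / 2)
  have hεU : Metric.ball z ε ⊆ U := (Metric.ball_subset_ball (min_le_left _ _)).trans hδU
  have hmem : ∀ᶠ x in returns h z, h^[x.1] z - x.2 ∈ Metric.ball z ε :=
    eventually_returns_mem (Metric.ball_mem_nhds z (by positivity))
  have hgt' := frequently_returns_dvd h.continuous hT
    (fun x y hx hy => by push_cast [Prod.fst_add, Prod.snd_add]; linarith) hgt hq
  have hlt' := frequently_returns_dvd h.continuous hT
    (fun x y hx hy => by push_cast [Prod.fst_add, Prod.snd_add]; linarith) hlt hq
  obtain ⟨⟨_, c⟩, ⟨hc, i, rfl⟩, hi, hic⟩ :=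
    (hgt'.and_eventually (eventually_returns_pos.and hmem)).exists
  obtain ⟨⟨_, d⟩, ⟨hd, j, rfl⟩, hj, hjd⟩ :=
    (hlt'.and_eventually (eventually_returns_pos.and hmem)).exists
  have hq' : (0 : ℤ) < q := Int.natCast_pos.2 hq
  push_cast at hc hd
  rw [mul_left_comm, mul_lt_mul_iff_right₀ hq'] at hc hd
  exact hd.not_ge <| hh.mul_le_of_mul_lt_of_mapsTo_compl hT hqp (min_le_right _ _)
    (hfree.mono hεU (compl_subset_compl.2 hεU)) (Nat.pos_of_mul_pos_left hi)
    (Nat.pos_of_mul_pos_left hj) hic hjd hc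

lemma eventually_cofinite_mapsTo_sub_compl (hc : Continuous h) {K : Set ℂ} (hK : IsCompact K) :
    ∀ᶠ p : ℤ in cofinite, MapsTo (fun x => h x - p) K Kᶜ := by
  have hint : Tendsto (fun p : ℤ => (p : ℂ)) cofinite (cocompact ℂ) :=
    (Complex.isUniformEmbedding_ofReal.isClosedEmbedding.tendsto_cocompact.comp
      Int.tendsto_coe_cofinite).congr Complex.ofReal_intCast
  have hcompact : IsCompact ((fun x : ℂ × ℂ => h x.1 - x.2) '' K ×ˢ K) :=
    (hK.prod hK).image (by fun_prop)
  filter_upwards [hint hcompact.compl_mem_cocompact] with p hp x hx hpx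
  exact hp ⟨(x, h x - p), ⟨hx, hpx⟩, sub_sub_cancel _ _⟩

lemma HasSymmLogSlope.eventually_returns_cofinite_le_of_lt (hh : HasSymmLogSlope h)
    (hT : ∀ k : ℤ, Function.Commute h (· + (k : ℂ))) (hp : ∀ (p : ℤ) x, h x ≠ x + p) (z : ℂ) :
    ∀ᶠ x in returns h z, ∀ᶠ p : ℤ in cofinite, ∀ᶠ y in returns h z,
      (p * x.1 < x.2 → p * y.1 ≤ y.2) ∧ (p * y.1 < y.2 → p * x.1 ≤ x.2) := by
  have hball : ∀ᶠ x in returns h z, 0 < x.1 ∧ h^[1 * x.1] z - x.2 ∈ Metric.ball z (1 / 2) := by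
    simpa only [one_mul] using eventually_returns_pos.and
      (eventually_returns_mem (Metric.ball_mem_nhds z one_half_pos))
  filter_upwards [hball] with x ⟨hx, hxz⟩
  filter_upwards [eventually_cofinite_mapsTo_sub_compl h.continuous
    (isCompact_closedBall z (1 / 2))] with p hfree
  have hfree' := hfree.mono Metric.ball_subset_closedBall
    (compl_subset_compl.2 Metric.ball_subset_closedBall)
  filter_upwards [hball] with y ⟨hy, hyz⟩
  exact ⟨hh.mul_le_of_mul_lt_of_mapsTo_compl (q := 1) hT (hp p) le_rfl hfree' hx hy hxz hyz,
    hh.mul_le_of_mul_lt_of_mapsTo_compl (q := 1) hT (hp p) le_rfl hfree' hy hx hyz hxz⟩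

lemma HasSymmLogSlope.exists_eventually_returns_mem_Icc [(returns h z).NeBot]
    (hh : HasSymmLogSlope h) (hT : ∀ k : ℤ, Function.Commute h (· + (k : ℂ)))
    (hp : ∀ (p : ℤ) x, h x ≠ x + p) :
    ∃ a b : ℤ, ∀ᶠ x in returns h z, (x.2 / x.1 : ℝ) ∈ Icc (a : ℝ) b := by
  obtain ⟨x, hx, hle⟩ :=
    (eventually_returns_pos.and (hh.eventually_returns_cofinite_le_of_lt hT hp z)).exists
  have hx' : (0 : ℤ) < x.1 := Int.natCast_pos.2 hx
  rw [Int.cofinite_eq, eventually_sup] at hle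
  obtain ⟨a, ha, hax⟩ :=
    (hle.1.and ((tendsto_id.atBot_mul_const' hx').eventually_lt_atBot x.2)).exists
  obtain ⟨b, hb, hbx⟩ :=
    (hle.2.and ((tendsto_id.atTop_mul_const' hx').eventually_gt_atTop x.2)).exists
  refine ⟨a, b, ?_⟩
  filter_upwards [ha, hb, eventually_returns_pos] with y hay hby hy
  have hy' : (0 : ℝ) < y.1 := Nat.cast_pos.2 hy
  rw [mem_Icc, le_div_iff₀ hy', div_le_iff₀ hy']
  exact ⟨mod_cast hay.1 hax, mod_cast not_lt.1 fun hlt => (hby.2 hlt).not_gt hbx⟩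

theorem HasSymmLogSlope.exists_tendsto_returns (hh : HasSymmLogSlope h)
    (hT : ∀ k : ℤ, Function.Commute h (· + (k : ℂ)))
    (hqp : ∀ (q : ℕ) (p : ℤ) x, 0 < q → h^[q] x ≠ x + p) (z : ℂ) :
    ∃ ρ : ℝ, Tendsto (fun x : ℕ × ℤ => (x.2 / x.1 : ℝ)) (returns h z) (𝓝 ρ) := by
  rcases eq_or_neBot (returns h z) with hbot | _
  · exact ⟨0, hbot ▸ tendsto_bot⟩
  obtain ⟨a, b, hab⟩ := hh.exists_eventually_returns_mem_Icc (z := z) hT fun p x =>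
    hqp 1 p x one_pos
  refine tendsto_of_no_upcrossings (Rat.denseRange_cast) ?_
    ⟨b, eventually_map.2 (hab.mono fun x hx => hx.2)⟩
    ⟨a, eventually_map.2 (hab.mono fun x hx => hx.1)⟩
  rintro _ ⟨r, rfl⟩ _ ⟨s, rfl⟩ hrs ⟨hr, hs⟩
  have hden : (0 : ℝ) < r.den := Nat.cast_pos.2 r.den_pos
  refine hh.not_frequently_lt_and_gt (z := z) (p := r.num) hT r.den_pos
    (fun x => hqp _ _ x r.den_pos) ⟨(hr.and_eventually eventually_returns_pos).mono ?_,
      (hs.and_eventually eventually_returns_pos).mono ?_⟩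
  · rintro x ⟨hx, hpos⟩
    rw [Rat.cast_def, div_lt_div_iff₀ (Nat.cast_pos.2 hpos) hden, mul_comm] at hx
    exact_mod_cast hx
  · rintro x ⟨hx, hpos⟩
    have := hrs.trans hx
    rw [Rat.cast_def, div_lt_div_iff₀ hden (Nat.cast_pos.2 hpos), mul_comm (x.2 : ℝ)] at this
    exact_mod_cast this

end IntegerTranslations

/-! ### Lifts to the universal cover -/

lemma prj_Tr (k : ℤ) (p : Plane) : prj (Tr k p) = prj p := by
  simp [prj, Tr]

lemma prj_eq_prj_iff {p q : Plane} : prj p = prj q ↔ ∃ k, p = Tr k q := by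
  refine ⟨fun h => ?_, ?_⟩
  · obtain ⟨h₁, h₂⟩ := Prod.mk.inj h
    rw [← sub_eq_zero, ← AddCircle.coe_sub, AddCircle.coe_eq_zero_iff] at h₁
    obtain ⟨k, hk⟩ := h₁
    exact ⟨k, Prod.ext (by simp [Tr, ← sub_eq_iff_eq_add', ← hk]) h₂⟩
  · rintro ⟨k, rfl⟩
    exact prj_Tr k q

lemma surjective_prj : Function.Surjective prj :=
  QuotientAddGroup.mk_surjective.prodMap Function.surjective_id

lemma continuous_prj : Continuous prj :=
  (AddCircle.continuous_mk' 1).prodMap continuous_id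

lemma eq_of_prj_comp_eq {X : Type*} [TopologicalSpace X] [PreconnectedSpace X] {g g' : X → Plane}
    (hg : Continuous g) (hg' : Continuous g') (h : ∀ x, prj (g x) = prj (g' x)) {a : X}
    (ha : g a = g' a) : g = g' := by
  have hx (x : X) := Prod.mk.inj (h x)
  have hfst := (AddCircle.isCoveringMap_coe (1 : ℝ)).eq_of_comp_eq (g₁ := fun x => (g x).1)
    (g₂ := fun x => (g' x).1) (by fun_prop) (by fun_prop)
    (funext fun x => (hx x).1) a (congrArg Prod.fst ha)
  exact funext fun x => Prod.ext (congrFun hfst x) (hx x).2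

lemma exists_displacement {H : unitInterval × Ann → Ann} (hc : Continuous H)
    (h₀ : ∀ z, H (0, z) = z) :
    ∃ D : unitInterval × Ann → ℝ, Continuous D ∧ (∀ z, D (0, z) = 0) ∧
      ∀ x, x.2.1 + (D x : AddCircle (1 : ℝ)) = (H x).1 := by
  let K : C(unitInterval × Ann, AddCircle (1 : ℝ)) := ⟨fun x => (H x).1 - x.2.1, by fun_prop⟩
  have hK₀ (z : Ann) : K (0, z) = ((0 : ℝ) : AddCircle (1 : ℝ)) := by simp [K, h₀]
  have hcov := AddCircle.isCoveringMap_coe (1 : ℝ)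
  let D := hcov.liftHomotopy K (.const Ann 0) hK₀
  have hDK (x) : (D x : AddCircle (1 : ℝ)) = K x :=
    congrFun (hcov.liftHomotopy_lifts K (.const Ann 0) hK₀) x
  exact ⟨D, D.continuous, hcov.liftHomotopy_zero K (.const Ann 0) hK₀,
    fun x => (hDK x).symm ▸ add_sub_cancel _ _⟩

lemma IsotopicToId.exists_lift {f : Ann ≃ₜ Ann} (hiso : IsotopicToId f) :
    ∃ G : unitInterval × Plane → Plane, Continuous G ∧ (∀ t, Function.Injective fun p => G (t, p)) ∧
      (∀ p, G (0, p) = p) ∧ (∀ k p, G (1, Tr k p) = Tr k (G (1, p))) ∧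
      ∀ p, prj (G (1, p)) = f (prj p) := by
  obtain ⟨H, hHc, hH, hH₀, hH₁⟩ := hiso
  have hHc' : Continuous fun x : unitInterval × Ann => H x.1 x.2 :=
    hHc.comp ((continuous_subtype_val.comp continuous_fst).prodMk continuous_snd)
  obtain ⟨D, hDc, hD₀, hD⟩ := exists_displacement hHc' hH₀
  let G (x : unitInterval × Plane) : Plane := (x.2.1 + D (x.1, prj x.2), (H x.1 (prj x.2)).2)
  have hGH (t : unitInterval) (p : Plane) : prj (G (t, p)) = H t (prj p) :=
    Prod.ext (hD (t, prj p)) rfl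
  refine ⟨G, ?_, fun t p q hpq => ?_, fun p => ?_, fun k p => ?_, fun p => ?_⟩
  · have hprj : Continuous fun x : unitInterval × Plane => (x.1, prj x.2) :=
      continuous_fst.prodMk (continuous_prj.comp continuous_snd)
    exact ((continuous_fst.comp continuous_snd).add (hDc.comp hprj)).prodMk
      (continuous_snd.comp (hHc'.comp hprj))
  · obtain ⟨h, hh⟩ := hH t
    have hprj : prj p = prj q := by
      apply h.injective
      rw [← hh, ← hh, ← hGH, ← hGH]
      exact congrArg prj hpq
    have hfst := congrArg Prod.fst hpq
    simp only [G, hprj] at hfst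
    exact Prod.ext (add_right_cancel hfst) (Prod.mk.inj hprj).2
  · simp [G, hD₀, hH₀, prj]
  · simp only [G, prj_Tr]
    simp only [Tr, add_right_comm]
  · rw [hGH, ← hH₁]
    rfl

section Lift

variable {f : Ann ≃ₜ Ann} {F : Plane ≃ₜ Plane}

lemma IsLift.exists_isotopy (hlift : IsLift f F) (hiso : IsotopicToId f) :
    ∃ G : unitInterval × Plane → Plane, Continuous G ∧ (∀ t, Function.Injective fun p => G (t, p)) ∧
      (∀ p, G (0, p) = p) ∧ (∀ k p, G (1, Tr k p) = Tr k (G (1, p))) ∧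
      ∃ l, ∀ p, F p = Tr l (G (1, p)) := by
  obtain ⟨G, hGc, hGinj, hG₀, hGT, hGf⟩ := hiso.exists_lift
  have hprj (p : Plane) : prj (F p) = prj (G (1, p)) := by rw [hlift, hGf]
  obtain ⟨l, hl⟩ := prj_eq_prj_iff.1 (hprj 0)
  refine ⟨G, hGc, hGinj, hG₀, hGT, l, congrFun (eq_of_prj_comp_eq F.continuous ?_ ?_ hl)⟩
  · unfold Tr
    fun_prop
  · simpa only [prj_Tr] using hprj

lemma IsLift.commute_Tr (hlift : IsLift f F) (hiso : IsotopicToId f) (k : ℤ) :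
    Function.Commute F (Tr k) := by
  obtain ⟨G, -, -, -, hGT, l, hl⟩ := hlift.exists_isotopy hiso
  intro p
  rw [hl, hl, hGT]
  simp only [Tr, add_right_comm]

lemma IsLift.prj_iterate (hlift : IsLift f F) (n : ℕ) (p : Plane) :
    prj (F^[n] p) = f^[n] (prj p) :=
  Function.Semiconj.iterate_right hlift n p

/-- The homeomorphism `F` of `ℝ²` read on `ℂ` through `x + iy ↔ (x, y)`. -/
def onComplex (F : Plane ≃ₜ Plane) : ℂ ≃ₜ ℂ :=
  let e := Complex.equivRealProdCLM.toHomeomorph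
  e.trans (F.trans e.symm)

lemma onComplex_iterate (n : ℕ) (p : Plane) :
    (onComplex F)^[n] (Complex.equivRealProdCLM.symm p) =
      Complex.equivRealProdCLM.symm (F^[n] p) := by
  have : Function.Semiconj Complex.equivRealProdCLM.symm F (onComplex F) := fun p => by
    simp [onComplex]
  exact (this.iterate_right n p).symm

lemma equivRealProdCLM_symm_Tr (k : ℤ) (p : Plane) :
    Complex.equivRealProdCLM.symm (Tr k p) = Complex.equivRealProdCLM.symm p + k := by
  apply Complex.ext <;> simp [Tr]

lemma IsLift.commute_onComplex (hlift : IsLift f F) (hiso : IsotopicToId f) (k : ℤ) :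
    Function.Commute (onComplex F) (· + (k : ℂ)) := by
  intro z
  obtain ⟨p, rfl⟩ := Complex.equivRealProdCLM.symm.surjective z
  have hF := onComplex_iterate (F := F) 1
  simp only [Function.iterate_one] at hF
  simp only [← equivRealProdCLM_symm_Tr, hF, (hlift.commute_Tr hiso k).eq]

lemma IsLift.hasSymmLogSlope_onComplex (hlift : IsLift f F) (hiso : IsotopicToId f) :
    HasSymmLogSlope (onComplex F) := by
  obtain ⟨G, hGc, hGinj, hG₀, -, l, hl⟩ := hlift.exists_isotopy hiso
  let e := Complex.equivRealProdCLM
  have hG : HasSymmLogSlope fun z => e.symm (G (1, e z)) :=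
    .of_isotopy (G := fun x => e.symm (G (x.1, e x.2))) (by fun_prop)
      (fun t => e.symm.injective.comp ((hGinj t).comp e.injective)) (fun z => by simp [hG₀])
  convert (HasSymmLogSlope.add_const (l : ℂ)).comp hG (by fun_prop) using 1
  ext1 z
  simp [onComplex, hl, equivRealProdCLM_symm_Tr, e]

/-! ### Rotation numbers -/

lemma hasRotNum_prj (hF : ∀ k, Function.Commute F (Tr k)) {p : Plane} {ρ : ℝ}
    (hrec : PosRec f (prj p))
    (hρ : ∀ φ : ℕ → ℕ, StrictMono φ → Tendsto (fun i => f^[φ i] (prj p)) atTop (𝓝 (prj p)) →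
      Tendsto (fun i => ((F^[φ i] p).1 - p.1) / (φ i : ℝ)) atTop (𝓝 ρ)) :
    HasRotNum f F (prj p) ρ := by
  refine ⟨hrec, fun p' hp' φ hφ hlim => ?_⟩
  obtain ⟨k, rfl⟩ := prj_eq_prj_iff.1 hp'
  refine (hρ φ hφ hlim).congr fun i => ?_
  rw [((hF k).iterate_left _).eq]
  exact congrArg (· / _) (add_sub_add_right_eq_sub _ _ _).symm

lemma tendsto_div_of_forall_add_eq {u : ℕ → ℝ} {q : ℕ} (hq : 0 < q) {c : ℝ}
    (hu : ∀ n, u (n + q) = u n + c) : Tendsto (fun n => u n / n) atTop (𝓝 (c / q)) := by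
  have hq' : (q : ℝ) ≠ 0 := Nat.cast_ne_zero.2 hq.ne'
  let v (n : ℕ) : ℝ := u n - n * (c / q)
  have hv : Function.Periodic v q := fun n => by
    simp only [v, hu]
    push_cast
    field_simp
    ring
  have hfin : (range v).Finite := by
    refine ((finite_Iio q).image v).subset ?_
    rintro _ ⟨n, rfl⟩
    exact ⟨n % q, Nat.mod_lt n hq, hv.map_mod_nat n⟩
  obtain ⟨a, ha⟩ := hfin.bddBelow
  obtain ⟨b, hb⟩ := hfin.bddAbove
  have hv₀ : Tendsto (fun n => v n / n) atTop (𝓝 0) :=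
    tendsto_bdd_div_atTop_nhds_zero (.of_forall fun n => ha ⟨n, rfl⟩)
      (.of_forall fun n => hb ⟨n, rfl⟩) tendsto_natCast_atTop_atTop
  rw [← zero_add (c / q)]
  refine (hv₀.add_const (c / q)).congr' ?_
  filter_upwards [eventually_gt_atTop 0] with n hn
  simp only [v]
  field_simp
  ring

lemma IsLift.hasRotNum_of_iterate_eq (hlift : IsLift f F) (hF : ∀ k, Function.Commute F (Tr k))
    {q : ℕ} (hq : 0 < q) {k : ℤ} {p : Plane} (hp : F^[q] p = Tr k p) :
    HasRotNum f F (prj p) (k / q) := by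
  have hfix : Function.IsFixedPt f^[q] (prj p) := by
    rw [Function.IsFixedPt, ← hlift.prj_iterate, hp, prj_Tr]
  refine hasRotNum_prj hF ⟨fun i => q * (i + 1), ?_, ?_⟩ fun φ hφ _ => ?_
  · exact fun i j hij => Nat.mul_lt_mul_of_pos_left (Nat.succ_lt_succ hij) hq
  · simp only [Function.iterate_mul, (hfix.iterate _).eq, tendsto_const_nhds]
  · refine (tendsto_div_of_forall_add_eq (u := fun n => (F^[n] p).1 - p.1) hq fun n => ?_).comp
      hφ.tendsto_atTop
    rw [Function.iterate_add_apply, hp, ((hF k).iterate_left n).eq]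
    exact add_sub_right_comm _ _ _

lemma tendsto_Tr_neg_round {ι : Type*} {l : Filter ι} {w : ι → Plane} {p : Plane}
    (hw : Tendsto (fun i => prj (w i)) l (𝓝 (prj p))) :
    Tendsto (fun i => Tr (-round ((w i).1 - p.1)) (w i)) l (𝓝 p) := by
  obtain ⟨hfst, hsnd⟩ := Prod.tendsto_iff _ _ |>.1 hw
  refine (Prod.tendsto_iff _ _).2 ⟨?_, hsnd⟩
  rw [tendsto_iff_norm_sub_tendsto_zero] at hfst ⊢
  refine hfst.congr fun i => (UnitAddCircle.norm_eq (x := (w i).1 - p.1)).trans ?_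
  simp only [Tr, Int.cast_neg, ← sub_eq_add_neg, Real.norm_eq_abs, sub_right_comm]

lemma IsLift.tendsto_returns (hlift : IsLift f F) {p : Plane} {φ : ℕ → ℕ} (hφ : StrictMono φ)
    (hlim : Tendsto (fun i => f^[φ i] (prj p)) atTop (𝓝 (prj p))) :
    Tendsto (fun i => (φ i, round ((F^[φ i] p).1 - p.1))) atTop
      (returns (onComplex F) (Complex.equivRealProdCLM.symm p)) := by
  simp only [← hlift.prj_iterate] at hlim
  refine tendsto_inf.2 ⟨tendsto_comap_iff.2 ?_, tendsto_principal.2 ?_⟩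
  · refine ((Complex.equivRealProdCLM.symm.continuous.tendsto p).comp
      (tendsto_Tr_neg_round hlim)).congr fun i => ?_
    simp only [Function.comp_apply, equivRealProdCLM_symm_Tr, onComplex_iterate, Int.cast_neg,
      sub_eq_add_neg]
  · exact hφ.tendsto_atTop.eventually_gt_atTop 0

lemma IsLift.hasRotNum_of_tendsto_returns (hlift : IsLift f F)
    (hF : ∀ k, Function.Commute F (Tr k)) {p : Plane} (hrec : PosRec f (prj p)) {ρ : ℝ}
    (hρ : Tendsto (fun x : ℕ × ℤ => (x.2 / x.1 : ℝ))
      (returns (onComplex F) (Complex.equivRealProdCLM.symm p)) (𝓝 ρ)) :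
    HasRotNum f F (prj p) ρ := by
  refine hasRotNum_prj hF hrec fun φ hφ hlim => ?_
  have hround := hρ.comp (hlift.tendsto_returns hφ hlim)
  let δ (i : ℕ) : ℝ := (F^[φ i] p).1 - p.1 - round ((F^[φ i] p).1 - p.1)
  have hδ (i : ℕ) : |δ i| ≤ 1 / 2 := abs_sub_round _
  have hδ₀ : Tendsto (fun i => δ i / φ i) atTop (𝓝 0) :=
    tendsto_bdd_div_atTop_nhds_zero (.of_forall fun i => (abs_le.1 (hδ i)).1)
      (.of_forall fun i => (abs_le.1 (hδ i)).2)
      (tendsto_natCast_atTop_atTop.comp hφ.tendsto_atTop)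
  rw [← add_zero ρ]
  refine (hround.add hδ₀).congr fun i => ?_
  simp only [Function.comp_apply, δ]
  ring

end Lift

theorem recurrent_implies_rotation_number_general (f : Ann ≃ₜ Ann) (F : Plane ≃ₜ Plane)
    (hiso : IsotopicToId f) (hlift : IsLift f F) (hrec : ∃ z : Ann, PosRec ⇑f z) :
    (Rot ⇑f ⇑F).Nonempty := by
  have hF := hlift.commute_Tr hiso
  by_cases hper : ∃ (q : ℕ) (k : ℤ) (p : Plane), 0 < q ∧ F^[q] p = Tr k p
  · obtain ⟨q, k, p, hq, hp⟩ := hper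
    exact ⟨k / q, prj p, hlift.hasRotNum_of_iterate_eq hF hq hp⟩
  · have hqp (q : ℕ) (k : ℤ) (w : ℂ) (hq : 0 < q) : (onComplex F)^[q] w ≠ w + k := by
      obtain ⟨p, rfl⟩ := Complex.equivRealProdCLM.symm.surjective w
      rw [onComplex_iterate, ← equivRealProdCLM_symm_Tr,
        Complex.equivRealProdCLM.symm.injective.ne_iff]
      exact fun hp => hper ⟨q, k, p, hq, hp⟩
    obtain ⟨z, hz⟩ := hrec
    obtain ⟨p, rfl⟩ := surjective_prj z
    obtain ⟨ρ, hρ⟩ := (hlift.hasSymmLogSlope_onComplex hiso).exists_tendsto_returns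
      (hlift.commute_onComplex hiso) hqp (Complex.equivRealProdCLM.symm p)
    exact ⟨ρ, prj p, hlift.hasRotNum_of_tendsto_returns hF hz hρ⟩

/-- Corollary 4.3: if `f` has a positively recurrent point then `Rot(F) ≠ ∅`. -/
theorem recurrent_implies_rotation_number
    (f : Ann ≃ₜ Ann) (F : Plane ≃ₜ Plane)
    (hiso : IsotopicToId f) (hint : IntersectionProperty f) (hlift : IsLift f F)
    (hrec : ∃ z : Ann, PosRec ⇑f z) :
    (Rot ⇑f ⇑F).Nonempty :=
  recurrent_implies_rotation_number_general f F hiso hlift hrec
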